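/- Let n ≥ 1 and let f : [0, ∞) → ℝ be a continuous (n+1)-concave function with f(0) ≥ 0 and f(t) > 0 for all t > 0. Then the function g defined by g(t) = t / f(t) for t > 0 and g(0) = 0 is n-monotone on (0, ∞). -/

import Mathlib

open Matrix
open scoped ComplexOrder

/-- A real function `h` is `n`-monotone on a set `I ⊆ ℝ` if for all Hermitian `n × n`
complex matrices `A, B` with spectrum (i.e. all eigenvalues) in `I`, `A ≤ B` in the
Loewner order (i.e. `B − A` positive semidefinite) implies `h(A) ≤ h(B)`, where `h` is
applied via the continuous functional calculus `cfc`. -/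
def NMonotoneOn (n : ℕ) (h : ℝ → ℝ) (I : Set ℝ) : Prop :=
  ∀ A B : Matrix (Fin n) (Fin n) ℂ, A.IsHermitian → B.IsHermitian →
    spectrum ℝ A ⊆ I → spectrum ℝ B ⊆ I →
    (B - A).PosSemidef → (cfc h B - cfc h A).PosSemidef

/-- A real function `h` is `n`-concave on a set `I ⊆ ℝ` if for all Hermitian `n × n`
complex matrices `A, B` with spectrum in `I` and all `λ ∈ [0,1]`,
`h(λA + (1−λ)B) ≥ λ h(A) + (1−λ) h(B)` in the Loewner order. -/
def NConcaveOn (n : ℕ) (h : ℝ → ℝ) (I : Set ℝ) : Prop :=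
  ∀ A B : Matrix (Fin n) (Fin n) ℂ, A.IsHermitian → B.IsHermitian →
    spectrum ℝ A ⊆ I → spectrum ℝ B ⊆ I →
    ∀ l : ℝ, l ∈ Set.Icc (0 : ℝ) 1 →
      (cfc h (l • A + (1 - l) • B) - (l • cfc h A + (1 - l) • cfc h B)).PosSemidef

/-!
Write `h t = f t / t`; inverting, it is enough to see that `h` is `n`-antitone. For a column
`T = (S; v*)` with `n + 1` rows, `T h(T*T) T* ≤ f(TT*)`. The top left `n × n` corner of the left
side is `S h(S*S + vv*) S*`, and that of the right side is at most `f(SS*)` by Jensen's inequality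
for the isometry embedding the corner. Taking `S = A^(1/2)` and cancelling it on both sides gives
`h(A + vv*) ≤ h(A)`. Only one additional dimension is spent because an arbitrary positive
semidefinite increment is a sum of rank-one increments `vv*`, added one after the other.
-/

/-- A real function `h` is `n`-antitone on a set `I ⊆ ℝ` if applying it to Hermitian `n × n`
matrices with spectrum in `I` reverses the Loewner order: the decreasing counterpart of
`NMonotoneOn`, encoded in the same way. -/
def NAntitoneOn (n : ℕ) (h : ℝ → ℝ) (I : Set ℝ) : Prop :=
  ∀ A B : Matrix (Fin n) (Fin n) ℂ, A.IsHermitian → B.IsHermitian →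
    spectrum ℝ A ⊆ I → spectrum ℝ B ⊆ I →
    (B - A).PosSemidef → (cfc h A - cfc h B).PosSemidef

open scoped MatrixOrder

section FunctionalCalculus

variable {𝕜 m n : Type*} [RCLike 𝕜] [Fintype m] [DecidableEq m] [Fintype n] [DecidableEq n]

lemma pow_mul_eq_mul_pow {S : Type*} [Semiring S] {Z : Matrix m m S} {W : Matrix n n S}
    {V : Matrix m n S} (h : Z * V = V * W) (j : ℕ) : Z ^ j * V = V * W ^ j := by
  induction j with
  | zero => simp
  | succ j ih =>
    rw [pow_succ, pow_succ, Matrix.mul_assoc, h, ← Matrix.mul_assoc, ih, Matrix.mul_assoc]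

lemma aeval_mul_eq_mul_aeval {R S : Type*} [CommSemiring R] [Semiring S] [Algebra R S]
    {Z : Matrix m m S} {W : Matrix n n S} {V : Matrix m n S} (h : Z * V = V * W)
    (p : Polynomial R) : Polynomial.aeval Z p * V = V * Polynomial.aeval W p := by
  induction p using Polynomial.induction_on' with
  | add p q hp hq => simp only [map_add, Matrix.add_mul, Matrix.mul_add, hp, hq]
  | monomial j a =>
    simp only [Polynomial.aeval_monomial, ← Algebra.smul_def, Matrix.smul_mul, Matrix.mul_smul,
      pow_mul_eq_mul_pow h]

lemma cfc_mul_eq_mul_cfc (f : ℝ → ℝ) {Z : Matrix m m 𝕜} {W : Matrix n n 𝕜} {V : Matrix m n 𝕜}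
    (hZ : Z.IsHermitian) (hW : W.IsHermitian) (h : Z * V = V * W) :
    cfc f Z * V = V * cfc f W := by
  -- `f` agrees with a single interpolation polynomial on both (finite) spectra.
  let s : Finset ℝ := Z.finite_real_spectrum.toFinset ∪ W.finite_real_spectrum.toFinset
  let p : Polynomial ℝ := Lagrange.interpolate s id f
  have hp : ∀ t ∈ s, f t = p.eval t := fun t ht ↦
    (Lagrange.eval_interpolate_at_node f (v := id) (Set.injOn_id _) ht).symm
  have hfZ : cfc f Z = Polynomial.aeval Z p := by
    rw [← cfc_polynomial p Z hZ]
    exact cfc_congr fun t ht ↦ hp t (by simp [s, ht])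
  have hfW : cfc f W = Polynomial.aeval W p := by
    rw [← cfc_polynomial p W hW]
    exact cfc_congr fun t ht ↦ hp t (by simp [s, ht])
  rw [hfZ, hfW, aeval_mul_eq_mul_aeval h p]

lemma cfc_mul_cfc (f g : ℝ → ℝ) (A : Matrix n n 𝕜) :
    cfc f A * cfc g A = cfc (fun t ↦ f t * g t) A :=
  (cfc_mul f g A (A.finite_real_spectrum.continuousOn _)
    (A.finite_real_spectrum.continuousOn _)).symm

lemma cfc_submatrix_equiv (f : ℝ → ℝ) {A : Matrix n n 𝕜} (hA : A.IsHermitian) (e : m ≃ n) :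
    cfc f (A.submatrix e e) = (cfc f A).submatrix e e := by
  let P : Matrix m n 𝕜 := (1 : Matrix n n 𝕜).submatrix e (Equiv.refl n)
  have hP (M : Matrix n n 𝕜) : M.submatrix e e * P = P * M := by
    rw [submatrix_mul_equiv, Matrix.mul_one, one_submatrix_mul]
    rfl
  have hPP : P * Pᴴ = 1 := by
    rw [conjTranspose_submatrix, conjTranspose_one, submatrix_mul_equiv, Matrix.one_mul,
      submatrix_one_equiv]
  have hfP : cfc f (A.submatrix e e) * P = (cfc f A).submatrix e e * P :=
    (cfc_mul_eq_mul_cfc f (hA.submatrix e) hA (hP A)).trans (hP _).symm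
  simpa only [Matrix.mul_assoc, hPP, Matrix.mul_one] using congrArg (· * Pᴴ) hfP

lemma spectrum_submatrix_equiv (A : Matrix n n 𝕜) (e : m ≃ n) :
    spectrum ℝ (A.submatrix e e) = spectrum ℝ A :=
  AlgEquiv.spectrum_eq (reindexAlgEquiv ℝ 𝕜 e.symm) A

end FunctionalCalculus

section LoewnerOrder

variable {𝕜 m n : Type*} [RCLike 𝕜]

lemma conjTranspose_mul_mul_le [Finite m] [Fintype n] {A B : Matrix n n 𝕜} (hAB : A ≤ B)
    (C : Matrix n m 𝕜) : Cᴴ * A * C ≤ Cᴴ * B * C := by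
  rw [Matrix.le_iff, ← Matrix.sub_mul, ← Matrix.mul_sub]
  exact PosSemidef.conjTranspose_mul_mul_same hAB C

open scoped Matrix.Norms.L2Operator in
lemma inv_le_inv_of_posDef [Fintype n] [DecidableEq n] {A B : Matrix n n ℂ} (hA : A.PosDef)
    (hAB : A ≤ B) : B⁻¹ ≤ A⁻¹ := by
  rw [nonsing_inv_eq_ringInverse, nonsing_inv_eq_ringInverse]
  exact CStarAlgebra.ringInverse_le_ringInverse hAB hA.isStrictlyPositive

end LoewnerOrder

lemma NMonotoneOn.congr {n : ℕ} {g h : ℝ → ℝ} {I : Set ℝ} (hg : NMonotoneOn n g I)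
    (hgh : Set.EqOn g h I) : NMonotoneOn n h I := by
  intro A B hA hB hsA hsB hAB
  rw [← cfc_congr (hgh.mono hsA), ← cfc_congr (hgh.mono hsB)]
  exact hg A B hA hB hsA hsB hAB

lemma NAntitoneOn.inv {n : ℕ} {h : ℝ → ℝ} {I : Set ℝ} (hh : NAntitoneOn n h I)
    (hpos : ∀ t ∈ I, 0 < h t) : NMonotoneOn n (fun t ↦ (h t)⁻¹) I := by
  intro A B hA hB hsA hsB hAB
  have hcfc_inv {M : Matrix (Fin n) (Fin n) ℂ} (hM : IsSelfAdjoint M) (hsM : spectrum ℝ M ⊆ I) :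
      cfc (fun t ↦ (h t)⁻¹) M = (cfc h M)⁻¹ := by
    rw [cfc_inv h M (fun t ht ↦ (hpos t (hsM ht)).ne') (M.finite_real_spectrum.continuousOn _),
      nonsing_inv_eq_ringInverse]
  have hhB : (cfc h B).PosDef :=
    ((cfc_isStrictlyPositive_iff h B (B.finite_real_spectrum.continuousOn _)
      (hB : IsSelfAdjoint B)).2 fun t ht ↦ hpos t (hsB ht)).posDef
  rw [hcfc_inv hA hsA, hcfc_inv hB hsB]
  exact inv_le_inv_of_posDef hhB (hh A B hA hB hsA hsB hAB)

section RangeReflection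

variable {𝕜 m n : Type*} [RCLike 𝕜] [Fintype m] [DecidableEq m] [Fintype n]

/-- The reflection in the range of an isometry `V`, i.e. of a matrix with `Vᴴ * V = 1`: the
identity on that range and minus the identity on its orthogonal complement. It turns midpoint
concavity into Jensen's inequality for isometries. -/
def rangeReflection (V : Matrix m n 𝕜) : Matrix m m 𝕜 := 2 * (V * Vᴴ) - 1

lemma rangeReflection_mul {k : Type*} (V : Matrix m n 𝕜) (W : Matrix m k 𝕜) :
    rangeReflection V * W = (2 : ℝ) • (V * (Vᴴ * W)) - W := by
  simp only [rangeReflection, Matrix.sub_mul, two_mul, Matrix.add_mul, Matrix.mul_assoc,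
    Matrix.one_mul, two_smul]

lemma isHermitian_rangeReflection (V : Matrix m n 𝕜) : (rangeReflection V).IsHermitian := by
  rw [rangeReflection, two_mul]
  have hVV := isHermitian_mul_conjTranspose_self V
  exact (hVV.add hVV).sub isHermitian_one

lemma isHermitian_rangeReflection_mul_mul (V : Matrix m n 𝕜) {Y : Matrix m m 𝕜}
    (hY : Y.IsHermitian) : (rangeReflection V * Y * rangeReflection V).IsHermitian := by
  simpa only [(isHermitian_rangeReflection V).eq] using
    isHermitian_mul_mul_conjTranspose (rangeReflection V) hY

variable [DecidableEq n] {V : Matrix m n 𝕜}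

lemma rangeReflection_mul_isometry (hV : Vᴴ * V = 1) : rangeReflection V * V = V := by
  rw [rangeReflection_mul, hV, Matrix.mul_one, two_smul, add_sub_cancel_right]

lemma conjTranspose_mul_rangeReflection (hV : Vᴴ * V = 1) : Vᴴ * rangeReflection V = Vᴴ := by
  simpa only [conjTranspose_mul, (isHermitian_rangeReflection V).eq] using
    congrArg conjTranspose (rangeReflection_mul_isometry hV)

lemma rangeReflection_mul_self (hV : Vᴴ * V = 1) :
    rangeReflection V * rangeReflection V = 1 := by
  rw [rangeReflection_mul, conjTranspose_mul_rangeReflection hV, rangeReflection, two_mul,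
    two_smul, sub_sub_cancel]

lemma spectrum_rangeReflection_mul_mul (hV : Vᴴ * V = 1) (Y : Matrix m m 𝕜) :
    spectrum ℝ (rangeReflection V * Y * rangeReflection V) = spectrum ℝ Y :=
  spectrum.units_conjugate
    (u := ⟨_, _, rangeReflection_mul_self hV, rangeReflection_mul_self hV⟩)

lemma conjTranspose_mul_cfc_rangeReflection_mul_mul_mul (f : ℝ → ℝ) (hV : Vᴴ * V = 1)
    {Y : Matrix m m 𝕜} (hY : Y.IsHermitian) :
    Vᴴ * cfc f (rangeReflection V * Y * rangeReflection V) * V = Vᴴ * cfc f Y * V := by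
  set R := rangeReflection V
  have hfR : cfc f (R * Y * R) * R = R * cfc f Y :=
    cfc_mul_eq_mul_cfc f (isHermitian_rangeReflection_mul_mul V hY) hY
      (by rw [Matrix.mul_assoc, rangeReflection_mul_self hV, Matrix.mul_one])
  calc Vᴴ * cfc f (R * Y * R) * V
      = Vᴴ * (cfc f (R * Y * R) * R) * V := by
        simp only [Matrix.mul_assoc, R, rangeReflection_mul_isometry hV]
    _ = Vᴴ * R * cfc f Y * V := by rw [hfR, ← Matrix.mul_assoc]
    _ = Vᴴ * cfc f Y * V := by rw [conjTranspose_mul_rangeReflection hV]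

end RangeReflection

section Jensen

variable {m n k : Type*} [Fintype m] [DecidableEq m] [Fintype n] [DecidableEq n] [Fintype k]

lemma NConcaveOn.smul_cfc_add_smul_cfc_le {f : ℝ → ℝ} {I : Set ℝ}
    (hf : NConcaveOn (Fintype.card m) f I) {A B : Matrix m m ℂ} (hA : A.IsHermitian)
    (hB : B.IsHermitian) (hsA : spectrum ℝ A ⊆ I) (hsB : spectrum ℝ B ⊆ I) {l : ℝ}
    (hl : l ∈ Set.Icc (0 : ℝ) 1) :
    l • cfc f A + (1 - l) • cfc f B ≤ cfc f (l • A + (1 - l) • B) := by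
  let e := (Fintype.equivFin m).symm
  have hAB : (l • A + (1 - l) • B).IsHermitian := (hA.smul (.all _)).add (hB.smul (.all _))
  have h := hf (A.submatrix e e) (B.submatrix e e) (hA.submatrix e) (hB.submatrix e)
    (by rwa [spectrum_submatrix_equiv]) (by rwa [spectrum_submatrix_equiv]) l hl
  rw [cfc_submatrix_equiv f hA, cfc_submatrix_equiv f hB] at h
  refine (posSemidef_submatrix_equiv e).1 ?_
  rwa [submatrix_sub, Pi.sub_apply, Pi.sub_apply, ← cfc_submatrix_equiv f hAB]

lemma NConcaveOn.conjTranspose_mul_cfc_mul_le {f : ℝ → ℝ} {I : Set ℝ}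
    (hf : NConcaveOn (Fintype.card m) f I) {Y : Matrix m m ℂ} (hY : Y.IsHermitian)
    (hsY : spectrum ℝ Y ⊆ I) {V : Matrix m n ℂ} (hV : Vᴴ * V = 1) :
    Vᴴ * cfc f Y * V ≤ cfc f (Vᴴ * Y * V) := by
  -- The average of `Y` with its reflection in the range of `V` leaves that range invariant and
  -- acts on it as the compression of `Y`.
  set R := rangeReflection V
  have hY' : (R * Y * R).IsHermitian := isHermitian_rangeReflection_mul_mul V hY
  have hsY' : spectrum ℝ (R * Y * R) ⊆ I := (spectrum_rangeReflection_mul_mul hV Y).trans_subset hsY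
  let Z : Matrix m m ℂ := (1 / 2 : ℝ) • Y + (1 - 1 / 2 : ℝ) • (R * Y * R)
  have hZ : Z.IsHermitian := (hY.smul (.all _)).add (hY'.smul (.all _))
  have hZV : Z * V = V * (Vᴴ * Y * V) := by
    simp only [Z, R, Matrix.add_mul, Matrix.smul_mul, Matrix.mul_assoc,
      rangeReflection_mul_isometry hV, rangeReflection_mul V (Y * V)]
    module
  calc Vᴴ * cfc f Y * V
      = Vᴴ * ((1 / 2 : ℝ) • cfc f Y + (1 - 1 / 2 : ℝ) • cfc f (R * Y * R)) * V := by
        simp only [Matrix.mul_add, Matrix.add_mul, Matrix.mul_smul, Matrix.smul_mul,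
          R, conjTranspose_mul_cfc_rangeReflection_mul_mul_mul f hV hY]
        module
    _ ≤ Vᴴ * cfc f Z * V :=
        conjTranspose_mul_mul_le
          (hf.smul_cfc_add_smul_cfc_le hY hY' hsY hsY' (by norm_num)) V
    _ = cfc f (Vᴴ * Y * V) := by
        rw [Matrix.mul_assoc, cfc_mul_eq_mul_cfc f hZ (isHermitian_conjTranspose_mul_mul V hY) hZV,
          ← Matrix.mul_assoc, hV, Matrix.one_mul]

lemma mul_cfc_div_mul_conjTranspose_le_cfc {𝕜 : Type*} [RCLike 𝕜] {f : ℝ → ℝ} (hf0 : 0 ≤ f 0)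
    (T : Matrix m n 𝕜) :
    T * cfc (fun t ↦ f t / t) (Tᴴ * T) * Tᴴ ≤ cfc f (T * Tᴴ) := by
  have hTT : (T * Tᴴ).IsHermitian := isHermitian_mul_conjTranspose_self T
  calc T * cfc (fun t ↦ f t / t) (Tᴴ * T) * Tᴴ
      = cfc (fun t ↦ f t / t) (T * Tᴴ) * (T * Tᴴ) := by
        rw [← cfc_mul_eq_mul_cfc _ hTT (isHermitian_conjTranspose_mul_self T)
          (Matrix.mul_assoc T Tᴴ T), Matrix.mul_assoc]
    _ = cfc (fun t ↦ f t / t) (T * Tᴴ) * cfc (fun t ↦ t) (T * Tᴴ) := by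
        rw [cfc_id' ℝ (T * Tᴴ) hTT.isSelfAdjoint]
    _ = cfc (fun t ↦ f t / t * t) (T * Tᴴ) := cfc_mul_cfc ..
    _ ≤ cfc f (T * Tᴴ) := by
        refine cfc_mono (fun t _ ↦ ?_) (finite_real_spectrum.continuousOn _)
          (finite_real_spectrum.continuousOn _)
        -- At `t = 0` the left side is `f 0 / 0 * 0 = 0`, since division by zero gives zero.
        rcases eq_or_ne t 0 with rfl | ht
        · simpa using hf0
        · rw [div_mul_cancel₀ _ ht]

lemma NConcaveOn.mul_cfc_div_add_mul_conjTranspose_le {f : ℝ → ℝ}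
    (hf : NConcaveOn (Fintype.card m + Fintype.card k) f (Set.Ici 0)) (hf0 : 0 ≤ f 0)
    (S : Matrix m n ℂ) (D : Matrix k n ℂ) :
    S * cfc (fun t ↦ f t / t) (Sᴴ * S + Dᴴ * D) * Sᴴ ≤ cfc f (S * Sᴴ) := by
  classical
  rw [← Fintype.card_sum] at hf
  let T : Matrix (m ⊕ k) n ℂ := fromRows S D
  let J : Matrix (m ⊕ k) m ℂ := fromRows 1 0
  have hJ : Jᴴ * J = 1 := by
    simp [J, conjTranspose_fromRows_eq_fromCols_conjTranspose, fromCols_mul_fromRows]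
  have hJT : Jᴴ * T = S := by
    simp [J, T, conjTranspose_fromRows_eq_fromCols_conjTranspose, fromCols_mul_fromRows]
  have hTJ : Tᴴ * J = Sᴴ := by rw [← hJT, conjTranspose_mul, conjTranspose_conjTranspose]
  have hTT : Tᴴ * T = Sᴴ * S + Dᴴ * D := by
    simp [T, conjTranspose_fromRows_eq_fromCols_conjTranspose, fromCols_mul_fromRows]
  have hT : (T * Tᴴ).PosSemidef := posSemidef_self_mul_conjTranspose T
  calc S * cfc (fun t ↦ f t / t) (Sᴴ * S + Dᴴ * D) * Sᴴ
      = Jᴴ * (T * cfc (fun t ↦ f t / t) (Tᴴ * T) * Tᴴ) * J := by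
        rw [← hTT, ← hTJ, ← hJT]; simp only [Matrix.mul_assoc]
    _ ≤ Jᴴ * cfc f (T * Tᴴ) * J :=
        conjTranspose_mul_mul_le (mul_cfc_div_mul_conjTranspose_le_cfc hf0 T) J
    _ ≤ cfc f (Jᴴ * (T * Tᴴ) * J) :=
        hf.conjTranspose_mul_cfc_mul_le hT.isHermitian
          (fun _ ht ↦ spectrum_nonneg_of_nonneg (𝕜 := ℝ) hT.nonneg ht) hJ
    _ = cfc f (S * Sᴴ) := by rw [← hTJ, ← hJT]; simp only [Matrix.mul_assoc]

lemma NConcaveOn.cfc_div_add_le {f : ℝ → ℝ}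
    (hf : NConcaveOn (Fintype.card n + Fintype.card k) f (Set.Ici 0)) (hf0 : 0 ≤ f 0)
    {A : Matrix n n ℂ} (hA : A.PosDef) (D : Matrix k n ℂ) :
    cfc (fun t ↦ f t / t) (A + Dᴴ * D) ≤ cfc (fun t ↦ f t / t) A := by
  have hAsa : IsSelfAdjoint A := hA.isHermitian
  have hspec : ∀ t ∈ spectrum ℝ A, 0 < t :=
    (StarOrderedRing.isStrictlyPositive_iff_spectrum_pos A hAsa).1 hA.isStrictlyPositive
  set S := cfc (fun t ↦ √t) A
  set S' := cfc (fun t ↦ (√t)⁻¹) A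
  have hS : Sᴴ = S := (cfc_predicate _ A : IsSelfAdjoint S)
  have hS' : S'ᴴ = S' := (cfc_predicate _ A : IsSelfAdjoint S')
  have hSS : S * S = A := by
    rw [cfc_mul_cfc, cfc_congr fun t ht ↦ Real.mul_self_sqrt (hspec t ht).le, cfc_id' ℝ A hAsa]
  have hSS' : S * S' = 1 := by
    rw [cfc_mul_cfc, cfc_congr fun t ht ↦ mul_inv_cancel₀ (Real.sqrt_pos.2 (hspec t ht)).ne',
      cfc_const_one ℝ A hAsa]
  have hS'S : S' * S = 1 := mul_eq_one_comm.1 hSS'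
  have hfA : S' * cfc f A * S' = cfc (fun t ↦ f t / t) A := by
    rw [cfc_mul_cfc, cfc_mul_cfc]
    refine cfc_congr fun t ht ↦ ?_
    rw [mul_right_comm, ← mul_inv, Real.mul_self_sqrt (hspec t ht).le, inv_mul_eq_div]
  have h := hf.mul_cfc_div_add_mul_conjTranspose_le hf0 S D
  rw [hS, hSS] at h
  calc cfc (fun t ↦ f t / t) (A + Dᴴ * D)
      = (S' * S) * cfc (fun t ↦ f t / t) (A + Dᴴ * D) * (S * S') := by
        rw [hS'S, hSS', Matrix.one_mul, Matrix.mul_one]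
    _ = S'ᴴ * (S * cfc (fun t ↦ f t / t) (A + Dᴴ * D) * S) * S' := by
        rw [hS']; simp only [Matrix.mul_assoc]
    _ ≤ S'ᴴ * cfc f A * S' := conjTranspose_mul_mul_le h S'
    _ = cfc (fun t ↦ f t / t) A := by rw [hS', hfA]

lemma NConcaveOn.cfc_div_le_of_le {f : ℝ → ℝ} (hf : NConcaveOn (Fintype.card n + 1) f (Set.Ici 0))
    (hf0 : 0 ≤ f 0) {A B : Matrix n n ℂ} (hA : A.PosDef) (hAB : A ≤ B) :
    cfc (fun t ↦ f t / t) B ≤ cfc (fun t ↦ f t / t) A := by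
  obtain ⟨r, v, hv⟩ := posSemidef_iff_eq_sum_vecMulVec.1 hAB
  rw [eq_add_of_sub_eq' hv]
  generalize (Finset.univ : Finset (Fin r)) = s
  induction s using Finset.induction_on with
  | empty => simp
  | insert i s hi ih =>
    have hpos : (A + ∑ j ∈ s, vecMulVec (v j) (star (v j))).PosDef :=
      hA.add_posSemidef (posSemidef_sum _ fun j _ ↦ posSemidef_vecMulVec_self_star (v j))
    have hrank_one : vecMulVec (v i) (star (v i)) =
        (replicateRow Unit (star (v i)))ᴴ * replicateRow Unit (star (v i)) := by
      rw [conjTranspose_replicateRow, star_star, ← vecMulVec_eq]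
    rw [Finset.sum_insert hi, add_left_comm, add_comm, hrank_one]
    exact (hf.cfc_div_add_le hf0 hpos _).trans ih

end Jensen

lemma NConcaveOn.nAntitoneOn_div {n : ℕ} {f : ℝ → ℝ} (hf : NConcaveOn (n + 1) f (Set.Ici 0))
    (hf0 : 0 ≤ f 0) : NAntitoneOn n (fun t ↦ f t / t) (Set.Ioi 0) := by
  intro A B hA _ hsA _ hAB
  have hApos : A.PosDef :=
    ((StarOrderedRing.isStrictlyPositive_iff_spectrum_pos A hA.isSelfAdjoint).2 hsA).posDef
  rw [← Fintype.card_fin n] at hf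
  exact hf.cfc_div_le_of_le hf0 hApos hAB

theorem concave_implies_quotient_monotone_general {n : ℕ} {f : ℝ → ℝ}
    (hconc : NConcaveOn (n + 1) f (Set.Ici 0)) (hf0 : 0 ≤ f 0)
    (hfpos : ∀ t : ℝ, 0 < t → 0 < f t) :
    NMonotoneOn n (fun t ↦ t / f t) (Set.Ioi 0) := by
  simpa only [inv_div] using
    (hconc.nAntitoneOn_div hf0).inv fun t ht ↦ div_pos (hfpos t ht) ht

/-- If `f : [0, ∞) → ℝ` is continuous and `(n+1)`-concave with `f(0) ≥ 0` and `f(t) > 0`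
for `t > 0`, then the function `g` with `g(t) = t / f(t)` for `t > 0` and `g(0) = 0` is
`n`-monotone on `(0, ∞)`. -/
theorem concave_implies_quotient_monotone
    (n : ℕ) (hn : 1 ≤ n) (f : ℝ → ℝ)
    (hfc : ContinuousOn f (Set.Ici 0))
    (hconc : NConcaveOn (n + 1) f (Set.Ici 0))
    (hf0 : 0 ≤ f 0)
    (hfpos : ∀ t : ℝ, 0 < t → 0 < f t)
    (g : ℝ → ℝ)
    (hg : ∀ t : ℝ, 0 < t → g t = t / f t)
    (hg0 : g 0 = 0) :
    NMonotoneOn n g (Set.Ioi 0) := by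
  exact (concave_implies_quotient_monotone_general hconc hf0 hfpos).congr fun t ht ↦ (hg t ht).symm
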